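/- Let V ∈ ℝ^{d×ρ} and V_B ∈ ℝ^{d×ρ_B} each have orthonormal columns, and suppose the column space of V is contained in the column space of V_B. Then for every matrix R ∈ ℝ^{d×r}, ‖I_ρ − V^T R R^T V‖₂ ≤ ‖I_{ρ_B} − V_B^T R R^T V_B‖₂. -/

import Mathlib

/-!
The column space inclusion gives `V = V_B W` with `W = V_Bᵀ V`, and `W` again has orthonormal
columns. Hence `I - VᵀRRᵀV = Wᵀ (I - V_BᵀRRᵀV_B) W` is a compression of `I - V_BᵀRRᵀV_B`, and
compressing does not increase the spectral norm because `‖W‖ ≤ 1`.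
-/

open Matrix

/-- Euclidean norm of a vector in ℝ^n. -/
noncomputable def euclNorm {n : ℕ} (x : Fin n → ℝ) : ℝ := Real.sqrt (∑ i, x i ^ 2)

/-- Spectral norm (ℓ₂ operator norm) of a real matrix: the supremum of `‖A x‖₂`
over unit vectors `x`. -/
noncomputable def specNorm {m n : ℕ} (A : Matrix (Fin m) (Fin n) ℝ) : ℝ :=
  sSup {c : ℝ | ∃ x : Fin n → ℝ, euclNorm x = 1 ∧ c = euclNorm (A.mulVec x)}

lemma euclNorm_eq_norm_toLp {n : ℕ} (x : Fin n → ℝ) : euclNorm x = ‖WithLp.toLp 2 x‖ := by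
  simp [euclNorm, EuclideanSpace.norm_eq]

lemma mul_mul_eq_of_range_mulVecLin_le {α m n p : Type*} [CommSemiring α] [Fintype m] [Fintype n]
    [Fintype p] [DecidableEq p] {A : Matrix m n α} {B : Matrix m p α} {L : Matrix p m α}
    (hL : L * B = 1) (hrange : LinearMap.range A.mulVecLin ≤ LinearMap.range B.mulVecLin) :
    B * (L * A) = A := by
  refine Matrix.mulVec_injective <| funext fun x ↦ ?_
  obtain ⟨z, hz⟩ : ∃ z, B *ᵥ z = A *ᵥ x := hrange ⟨x, rfl⟩
  calc (B * (L * A)) *ᵥ x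
    _ = B *ᵥ (L *ᵥ (B *ᵥ z)) := by simp only [hz, mulVec_mulVec]
    _ = B *ᵥ z := by rw [mulVec_mulVec z L B, hL, one_mulVec]
    _ = A *ᵥ x := hz

section L2OpNorm

open scoped Matrix.Norms.L2Operator

lemma specNorm_eq_l2_opNorm {m n : ℕ} (A : Matrix (Fin m) (Fin n) ℝ) : specNorm A = ‖A‖ := by
  rw [l2_opNorm_def, ← ContinuousLinearMap.sSup_sphere_eq_norm, specNorm]
  congr 1
  ext c
  simp [(WithLp.toLp_surjective 2).exists, euclNorm_eq_norm_toLp, eq_comm]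

variable {𝕜 m n p : Type*} [RCLike 𝕜] [Fintype m] [Fintype n] [DecidableEq n]
  [Fintype p] [DecidableEq p]

lemma l2_opNorm_le_one_of_conjTranspose_mul_self_eq_one {W : Matrix m n 𝕜} (hW : Wᴴ * W = 1) :
    ‖W‖ ≤ 1 := by
  have h_sq : ‖W‖ * ‖W‖ ≤ 1 := by
    rw [← l2_opNorm_conjTranspose_mul_self, hW, cstar_norm_def, map_one]
    exact ContinuousLinearMap.norm_id_le
  exact (sq_le_one_iff₀ (norm_nonneg W)).1 (by rwa [sq])

lemma l2_opNorm_conjTranspose_mul_mul_le {W : Matrix p n 𝕜} (hW : Wᴴ * W = 1)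
    (A : Matrix p p 𝕜) : ‖Wᴴ * A * W‖ ≤ ‖A‖ := by
  have hW_le : ‖W‖ ≤ 1 := l2_opNorm_le_one_of_conjTranspose_mul_self_eq_one hW
  calc ‖Wᴴ * A * W‖
    _ ≤ ‖Wᴴ‖ * ‖A‖ * ‖W‖ := (l2_opNorm_mul _ _).trans (by gcongr; exact l2_opNorm_mul _ _)
    _ ≤ 1 * ‖A‖ * 1 := by gcongr; rwa [l2_opNorm_conjTranspose]
    _ = ‖A‖ := by ring

theorem spec_error_mono_of_range_le_general {V : Matrix m n 𝕜} {VB : Matrix m p 𝕜}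
    (hV : Vᴴ * V = 1) (hVB : VBᴴ * VB = 1)
    (hrange : LinearMap.range V.mulVecLin ≤ LinearMap.range VB.mulVecLin) (M : Matrix m m 𝕜) :
    ‖1 - Vᴴ * M * V‖ ≤ ‖1 - VBᴴ * M * VB‖ := by
  obtain ⟨W, rfl⟩ : ∃ W, VB * W = V := ⟨VBᴴ * V, mul_mul_eq_of_range_mulVecLin_le hVB hrange⟩
  have hW : Wᴴ * W = 1 := by
    rwa [conjTranspose_mul, Matrix.mul_assoc, ← Matrix.mul_assoc VBᴴ, hVB, Matrix.one_mul] at hV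
  have h_compress : 1 - (VB * W)ᴴ * M * (VB * W) = Wᴴ * (1 - VBᴴ * M * VB) * W := by
    simp only [Matrix.mul_sub, Matrix.sub_mul, Matrix.mul_one, hW, conjTranspose_mul,
      Matrix.mul_assoc]
  rw [h_compress]
  exact l2_opNorm_conjTranspose_mul_mul_le hW _

end L2OpNorm

/-- If `V ∈ ℝ^{d×ρ}` and `V_B ∈ ℝ^{d×ρ_B}` have orthonormal columns and the column
space of `V` is contained in that of `V_B`, then for every `R ∈ ℝ^{d×r}`,
`‖I_ρ − VᵀRRᵀV‖₂ ≤ ‖I_{ρ_B} − V_BᵀRRᵀV_B‖₂`. -/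
theorem spec_error_mono_of_range_le
    (d ρ ρB r : ℕ)
    (V : Matrix (Fin d) (Fin ρ) ℝ) (VB : Matrix (Fin d) (Fin ρB) ℝ)
    (hV : Vᵀ * V = 1) (hVB : VBᵀ * VB = 1)
    (hrange : LinearMap.range V.mulVecLin ≤ LinearMap.range VB.mulVecLin)
    (R : Matrix (Fin d) (Fin r) ℝ) :
    specNorm ((1 : Matrix (Fin ρ) (Fin ρ) ℝ) - Vᵀ * R * Rᵀ * V)
      ≤ specNorm ((1 : Matrix (Fin ρB) (Fin ρB) ℝ) - VBᵀ * R * Rᵀ * VB) := by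
  simpa only [specNorm_eq_l2_opNorm, conjTranspose_eq_transpose_of_trivial, Matrix.mul_assoc]
    using spec_error_mono_of_range_le_general hV hVB hrange (R * Rᵀ)
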